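/- Let P and Q be probability measures on a measurable space X with P absolutely continuous with respect to Q and with finite Kullback–Leibler divergence, let T : X → ℝ be bounded measurable, Z = ∫ e^T dQ, and let G be the Gibbs measure with density e^T / Z with respect to Q. Then ∫ T dP − log Z = D_KL(P‖Q) if and only if P = G (i.e., P coincides with G as measures, equivalently the densities agree Q-almost everywhere). -/

import Mathlib

open MeasureTheory

/-- The Kullback–Leibler divergence `∫ log (dP/dQ) dP`. -/
noncomputable def klDiv {X : Type*} [MeasurableSpace X]
    (P Q : Measure X) : ℝ :=
  ∫ x, Real.log ((P.rnDeriv Q x).toReal) ∂P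

/-!
The defect in the Donsker–Varadhan bound is itself a divergence: tilting the reference measure
subtracts `T - log Z` from the log-likelihood ratio, so with `G` the Gibbs measure
`D_KL(P‖G) = D_KL(P‖Q) - (∫ T dP - log Z)`. The two sides agree exactly when `D_KL(P‖G) = 0`,
that is, by the equality case of Gibbs' inequality, when `P = G`.
-/

section

variable {X : Type*} [MeasurableSpace X] {P Q : Measure X}

theorem klDiv_eq_zero_iff_of_measure_univ_eq [IsFiniteMeasure P] [IsFiniteMeasure Q]
    (hPQ : P ≪ Q) (hKL : Integrable (llr P Q) P) (huniv : P Set.univ = Q Set.univ) :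
    klDiv P Q = 0 ↔ P = Q := by
  have toReal_eq : (InformationTheory.klDiv P Q).toReal = klDiv P Q :=
    InformationTheory.toReal_klDiv_of_measure_eq hPQ huniv
  have ne_top : InformationTheory.klDiv P Q ≠ ⊤ := InformationTheory.klDiv_ne_top hPQ hKL
  rw [← toReal_eq, ENNReal.toReal_eq_zero_iff, or_iff_left ne_top,
    InformationTheory.klDiv_eq_zero_iff]

theorem klDiv_tilted_right [IsProbabilityMeasure P] [SigmaFinite Q] {T : X → ℝ}
    (hPQ : P ≪ Q) (hKL : Integrable (llr P Q) P) (hT : Integrable T P)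
    (hexp : Integrable (fun x => Real.exp (T x)) Q) :
    klDiv P (Q.tilted T) =
      klDiv P Q - (∫ x, T x ∂P - Real.log (∫ x, Real.exp (T x) ∂Q)) :=
  (integral_llr_tilted_right hPQ hT hexp hKL).trans (sub_add _ _ _)

theorem donsker_varadhan_equality_iff_gibbs_general [IsProbabilityMeasure P] [SigmaFinite Q]
    {T : X → ℝ} (hPQ : P ≪ Q) (hKL : Integrable (llr P Q) P) (hT : Integrable T P)
    (hexp : Integrable (fun x => Real.exp (T x)) Q) :
    ∫ x, T x ∂P - Real.log (∫ x, Real.exp (T x) ∂Q) = klDiv P Q ↔ P = Q.tilted T := by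
  have : NeZero Q := ⟨by
    rintro rfl
    exact IsProbabilityMeasure.ne_zero P (Measure.absolutelyContinuous_zero_iff.1 hPQ)⟩
  have : IsProbabilityMeasure (Q.tilted T) := isProbabilityMeasure_tilted hexp
  have hPG : P ≪ Q.tilted T := hPQ.trans (absolutelyContinuous_tilted hexp)
  have hKLG : Integrable (llr P (Q.tilted T)) P := integrable_llr_tilted_right hPQ hT hKL hexp
  rw [← klDiv_eq_zero_iff_of_measure_univ_eq hPG hKLG (by simp only [measure_univ]),
    klDiv_tilted_right hPQ hKL hT hexp, sub_eq_zero, eq_comm]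

end

/-- Equality in the Donsker–Varadhan bound holds if and only if `P` coincides with
the Gibbs measure `G` with density `e^T / Z` with respect to `Q`. -/
theorem donsker_varadhan_equality_iff_gibbs
    {X : Type*} [MeasurableSpace X] (P Q : Measure X)
    [IsProbabilityMeasure P] [IsProbabilityMeasure Q]
    (hPQ : P ≪ Q)
    (hKL : Integrable (fun x => Real.log ((P.rnDeriv Q x).toReal)) P)
    (T : X → ℝ) (hT : Measurable T) (C : ℝ) (hC : ∀ x, |T x| ≤ C)
    (Z : ℝ) (hZ : Z = ∫ x, Real.exp (T x) ∂Q)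
    (G : Measure X)
    (hG : G = Q.withDensity (fun x => ENNReal.ofReal (Real.exp (T x) / Z))) :
    (∫ x, T x ∂P - Real.log Z = klDiv P Q) ↔ P = G := by
  have hTP : Integrable T P := .of_bound hT.aestronglyMeasurable C (ae_of_all P hC)
  have hexp : Integrable (fun x => Real.exp (T x)) Q := by
    simpa only [one_mul] using ProbabilityTheory.integrable_exp_mul_of_le 1 C zero_le_one
      hT.aemeasurable (ae_of_all Q fun x => le_of_abs_le (hC x))
  subst hZ hG
  exact donsker_varadhan_equality_iff_gibbs_general hPQ hKL hTP hexp
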